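/- The necessary bounding condition is not sufficient for deserializability: the layout [P 0 4, V, P 3 1, V] is valid and every position at which it has item V lies in the range of some pointer occurring in it, yet it is not deserializable. -/

import Mathlib

/-- A layout item: fixed-length field, variable-length field, or pointer `P o s`
with offset `o` and span `s`. -/
inductive Item : Type where
  | F : Item
  | V : Item
  | P : ℕ → ℕ → Item
deriving DecidableEq

/-- A layout is valid if every pointer `P o s` occurring in it satisfies
`o < |ℓ|` and `s ≤ |ℓ| - o`. -/
def ValidLayout (ℓ : List Item) : Prop :=
  ∀ o s : ℕ, Item.P o s ∈ ℓ → o < ℓ.length ∧ s ≤ ℓ.length - o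

/-- Facts the parser can know about positions of the layout. -/
inductive ParseFact : Type where
  | Beg : ℕ → ParseFact
  | Len : ℕ → ParseFact
  | Val : ℕ → ParseFact
deriving DecidableEq

/-- The smallest set of facts closed under the parser's inference rules. -/
inductive Derivable (ℓ : List Item) : ParseFact → Prop where
  | begin : Derivable ℓ (.Beg 0)
  | fieldF (i : ℕ) : ℓ[i]? = some .F → Derivable ℓ (.Len i)
  | fieldP (i o s : ℕ) : ℓ[i]? = some (.P o s) → Derivable ℓ (.Len i)
  | forwardVal (i : ℕ) : Derivable ℓ (.Beg i) → Derivable ℓ (.Len i) → Derivable ℓ (.Val i)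
  | forwardBeg (i : ℕ) : Derivable ℓ (.Beg i) → Derivable ℓ (.Len i) → Derivable ℓ (.Beg (i+1))
  | backwardBeg (i : ℕ) : Derivable ℓ (.Beg (i+1)) → Derivable ℓ (.Len i) → Derivable ℓ (.Beg i)
  | backwardVal (i : ℕ) : Derivable ℓ (.Beg (i+1)) → Derivable ℓ (.Len i) → Derivable ℓ (.Val i)
  | join (i : ℕ) : Derivable ℓ (.Beg i) → Derivable ℓ (.Beg (i+1)) → Derivable ℓ (.Len i)
  | jumpRight (i o s : ℕ) : ℓ[i]? = some (.P o s) → Derivable ℓ (.Val i) →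
      Derivable ℓ (.Beg o) → Derivable ℓ (.Beg (o+s))
  | jumpLeft (i o s : ℕ) : ℓ[i]? = some (.P o s) → Derivable ℓ (.Val i) →
      Derivable ℓ (.Beg (o+s)) → Derivable ℓ (.Beg o)

/-- A layout is deserializable if the length of every varfield is derivable. -/
def Deserializable (ℓ : List Item) : Prop :=
  ∀ j : ℕ, ℓ[j]? = some Item.V → Derivable ℓ (.Len j)

/-- Invariant containing all derivable facts of the counterexample layout. -/
def KnownFact : ParseFact → Prop
  | .Beg i => i = 0 ∨ i = 1 ∨ i = 4
  | .Len i => i = 0 ∨ i = 2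
  | .Val i => i = 0

theorem item_cases (i : ℕ) (x : Item)
    (h : [Item.P 0 4, Item.V, Item.P 3 1, Item.V][i]? = some x) :
    (i = 0 ∧ x = .P 0 4) ∨ (i = 1 ∧ x = .V) ∨ (i = 2 ∧ x = .P 3 1) ∨ (i = 3 ∧ x = .V) := by
  rcases i with _ | _ | _ | _ | i <;> simp_all

theorem known_of_derivable (f : ParseFact)
    (h : Derivable [Item.P 0 4, Item.V, Item.P 3 1, Item.V] f) : KnownFact f := by
  induction h with
  | begin => simp [KnownFact]
  | fieldF i h => have := item_cases _ _ h; simp at this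
  | fieldP i o s h => have := item_cases _ _ h; simp [KnownFact] at *; omega
  | forwardVal i _ _ a b => simp only [KnownFact] at *; omega
  | forwardBeg i _ _ a b => simp only [KnownFact] at *; omega
  | backwardBeg i _ _ a b => simp only [KnownFact] at *; omega
  | backwardVal i _ _ a b => simp only [KnownFact] at *; omega
  | join i _ _ a b => simp only [KnownFact] at *; omega
  | jumpRight i o s h _ _ a b =>
    have := item_cases _ _ h; simp [KnownFact] at *; omega
  | jumpLeft i o s h _ _ a b =>
    have := item_cases _ _ h; simp [KnownFact] at *; omega

/-- The necessary bounding condition is not sufficient: `[P 0 4, V, P 3 1, V]` is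
valid and every varfield position lies in the range of some pointer of the
layout, yet the layout is not deserializable. -/
theorem bounding_not_sufficient :
    ValidLayout [Item.P 0 4, Item.V, Item.P 3 1, Item.V] ∧
    (∀ j : ℕ, [Item.P 0 4, Item.V, Item.P 3 1, Item.V][j]? = some Item.V →
      ∃ p o s : ℕ, [Item.P 0 4, Item.V, Item.P 3 1, Item.V][p]? = some (Item.P o s) ∧
        o ≤ j ∧ j < o + s) ∧
    ¬ Deserializable [Item.P 0 4, Item.V, Item.P 3 1, Item.V] := by
  refine ⟨?_, ?_, ?_⟩
  · intro o s h
    simp at h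
    rcases h with ⟨rfl, rfl⟩ | ⟨rfl, rfl⟩ <;> simp
  · intro j h
    have := item_cases _ _ h
    simp at this
    exact ⟨0, 0, 4, rfl, by omega, by omega⟩
  · intro h
    have := known_of_derivable _ (h 1 rfl)
    simp [KnownFact] at this
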